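/- arXiv:2512.12275 — 2 statements merged into one kernel-verified Lean document; each statement's English description precedes it below -/
import Mathlib

section
/- For every n ≥ 2, the polynomial R_n(x) has −1 as a root of multiplicity exactly ⌊(n−2)/2⌋; that is, (1+x)^{⌊(n−2)/2⌋} divides R_n(x) and the quotient polynomial does not vanish at x = −1. -/
open Finset Polynomial

/-- The word `π_1 π_2 ⋯ π_n` of a permutation of `[n] = {1,…,n}`, as a function `ℕ → ℤ`,
with the convention that positions outside `{1,…,n}` (in particular position `0`) get value `0`. -/
def permWord (n : ℕ) (σ : Equiv.Perm (Fin n)) : ℕ → ℤ := fun i =>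
  if h : 1 ≤ i ∧ i ≤ n then ((σ ⟨i - 1, by omega⟩ : ℕ) : ℤ) + 1 else 0

/-- A word changes direction at index `i`. -/
def changesDir (w : ℕ → ℤ) (i : ℕ) : Prop :=
  (w (i - 1) < w i ∧ w (i + 1) < w i) ∨ (w i < w (i - 1) ∧ w i < w (i + 1))

instance (w : ℕ → ℤ) : DecidablePred (changesDir w) := fun i => by
  unfold changesDir; infer_instance

/-- The number of alternating runs of a permutation of `[n]`:
one plus the number of indices `i ∈ {2,…,n-1}` where the word changes direction. -/
def runA (n : ℕ) (σ : Equiv.Perm (Fin n)) : ℕ :=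
  1 + ((Finset.Icc 2 (n - 1)).filter (changesDir (permWord n σ))).card

/-- The run polynomial `R_n(x) = ∑_{σ ∈ S_n} x^{run σ}`. -/
noncomputable def runPoly (n : ℕ) : Polynomial ℤ :=
  ∑ σ : Equiv.Perm (Fin n), X ^ runA n σ

/-- `altChain w b l` holds if the values of `w` along the index list `l` alternate,
starting with a strict descent if `b = true` (resp. ascent if `b = false`). -/
def altChain (w : ℕ → ℤ) : Bool → List ℕ → Prop
  | _, [] => True
  | _, [_] => True
  | b, i :: j :: rest => (if b then w j < w i else w i < w j) ∧ altChain w (!b) (j :: rest)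

/-- `las n σ` : the maximum length of an alternating subsequence
`σ_{i₁} > σ_{i₂} < σ_{i₃} > ⋯` (indices strictly increasing) of `σ`. -/
noncomputable def las (n : ℕ) (σ : Equiv.Perm (Fin n)) : ℕ :=
  sSup {k | ∃ l : List ℕ, l.length = k ∧ l.Chain' (· < ·) ∧
    (∀ i ∈ l, 1 ≤ i ∧ i ≤ n) ∧ altChain (permWord n σ) true l}

/-- The set of peaks of a permutation: indices `i ∈ {2,…,n-1}` with `σ_{i-1} < σ_i > σ_{i+1}`. -/
def peakSet (n : ℕ) (σ : Equiv.Perm (Fin n)) : Finset ℕ :=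
  (Finset.Icc 2 (n - 1)).filter fun i =>
    permWord n σ (i - 1) < permWord n σ i ∧ permWord n σ (i + 1) < permWord n σ i

/-- The set of valleys of a permutation: indices `i ∈ {2,…,n-1}` with `σ_{i-1} > σ_i < σ_{i+1}`. -/
def valleySet (n : ℕ) (σ : Equiv.Perm (Fin n)) : Finset ℕ :=
  (Finset.Icc 2 (n - 1)).filter fun i =>
    permWord n σ i < permWord n σ (i - 1) ∧ permWord n σ i < permWord n σ (i + 1)

/-- The set of left peaks of a permutation: indices `i ∈ {1,…,n-1}` with
`σ_{i-1} < σ_i > σ_{i+1}`, with the convention `σ_0 = 0`. -/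
def leftPeakSet (n : ℕ) (σ : Equiv.Perm (Fin n)) : Finset ℕ :=
  (Finset.Icc 1 (n - 1)).filter fun i =>
    permWord n σ (i - 1) < permWord n σ i ∧ permWord n σ (i + 1) < permWord n σ i

/-- The number of descents of a permutation of `[n]`. -/
def desA (n : ℕ) (σ : Equiv.Perm (Fin n)) : ℕ :=
  ((Finset.Icc 1 (n - 1)).filter fun i => permWord n σ (i + 1) < permWord n σ i).card

/-- The maximum letter (as a natural number, `0` for the empty word) of `w₂`, the longest
suffix of `w_1 ⋯ w_{i-1}` all of whose letters exceed `w i`. -/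
def w2Max (w : ℕ → ℤ) (i : ℕ) : ℕ :=
  ((Finset.Ico 1 i).filter fun j => ∀ t ∈ Finset.Ico j i, w i < w t).sup fun j => (w j).toNat

/-- The maximum letter (as a natural number, `0` for the empty word) of `w₄`, the longest
prefix of `w_{i+1} ⋯ w_n` all of whose letters exceed `w i`. -/
def w4Max (n : ℕ) (w : ℕ → ℤ) (i : ℕ) : ℕ :=
  ((Finset.Ioc i n).filter fun j => ∀ t ∈ Finset.Ioc i j, w i < w t).sup fun j => (w j).toNat

/-- André permutation of `[n]`: no double descent, no final descent, and for every
`i ∈ {2,…,n-1}`, in the `π_i`-factorization the maximum letter of `w₂` is smaller than the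
maximum letter of `w₄` (maximum of the empty word being `0`). -/
def IsAndre (n : ℕ) (σ : Equiv.Perm (Fin n)) : Prop :=
  (∀ i ∈ Finset.Icc 2 (n - 1),
      ¬(permWord n σ i < permWord n σ (i - 1) ∧ permWord n σ (i + 1) < permWord n σ i)) ∧
  permWord n σ (n - 1) < permWord n σ n ∧
  ∀ i ∈ Finset.Icc 2 (n - 1), w2Max (permWord n σ) i < w4Max n (permWord n σ) i

/-- `d_{n,i}` : the number of André permutations of `[n]` with exactly `i` descents. -/
noncomputable def andreCount (n i : ℕ) : ℕ :=
  Nat.card {σ : Equiv.Perm (Fin n) // IsAndre n σ ∧ desA n σ = i}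

/-- A signed permutation of length `n`: a permutation of `[n]` together with a sign for
each position. -/
abbrev SignedPerm (n : ℕ) := Equiv.Perm (Fin n) × (Fin n → Bool)

/-- The word `π_1 π_2 ⋯ π_n` of a signed permutation, as a function `ℕ → ℤ`, with the
convention that positions outside `{1,…,n}` (in particular position `0`) get value `0`. -/
def signedWord (n : ℕ) (π : SignedPerm n) : ℕ → ℤ := fun i =>
  if h : 1 ≤ i ∧ i ≤ n then
    (if π.2 ⟨i - 1, by omega⟩ then -(((π.1 ⟨i - 1, by omega⟩ : ℕ) : ℤ) + 1)
      else ((π.1 ⟨i - 1, by omega⟩ : ℕ) : ℤ) + 1)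
  else 0

/-- `run_B` : one plus the number of indices `i ∈ {1,…,n-1}` where the word
`0 π_1 ⋯ π_n` changes direction. -/
def runB (n : ℕ) (π : SignedPerm n) : ℕ :=
  1 + ((Finset.Icc 1 (n - 1)).filter (changesDir (signedWord n π))).card

/-- `des_B` : the number of indices `i ∈ {0,…,n-1}` with `π_i > π_{i+1}`, where `π_0 = 0`. -/
def desB (n : ℕ) (π : SignedPerm n) : ℕ :=
  ((Finset.range n).filter fun i => signedWord n π (i + 1) < signedWord n π i).card

/-- The set of valleys of a signed permutation: indices `i ∈ {1,…,n-1}` with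
`π_{i-1} > π_i < π_{i+1}`, with the convention `π_0 = 0`. -/
def valleysB (n : ℕ) (π : SignedPerm n) : Finset ℕ :=
  (Finset.Icc 1 (n - 1)).filter fun i =>
    signedWord n π i < signedWord n π (i - 1) ∧ signedWord n π i < signedWord n π (i + 1)

/-- The maximum letter of `w₂` (as an element of `WithBot ℤ`, empty word giving `⊥ = -∞`). -/
def w2MaxB (w : ℕ → ℤ) (i : ℕ) : WithBot ℤ :=
  ((Finset.Ico 1 i).filter fun j => ∀ t ∈ Finset.Ico j i, w i < w t).sup fun j =>
    (w j : WithBot ℤ)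

/-- The maximum letter of `w₄` (as an element of `WithBot ℤ`, empty word giving `⊥ = -∞`). -/
def w4MaxB (n : ℕ) (w : ℕ → ℤ) (i : ℕ) : WithBot ℤ :=
  ((Finset.Ioc i n).filter fun j => ∀ t ∈ Finset.Ioc i j, w i < w t).sup fun j =>
    (w j : WithBot ℤ)

/-- Type B André permutation: no double descent, no final descent, and for every valley `i`,
in the `π_i`-factorization the maximum letter of `w₂` is smaller than the maximum letter of
`w₄` (maximum of the empty word being `-∞`). -/
def IsAndreB (n : ℕ) (π : SignedPerm n) : Prop :=
  (∀ i ∈ Finset.Icc 1 (n - 1),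
      ¬(signedWord n π i < signedWord n π (i - 1) ∧ signedWord n π (i + 1) < signedWord n π i)) ∧
  signedWord n π (n - 1) < signedWord n π n ∧
  ∀ i ∈ valleysB n π, w2MaxB (signedWord n π) i < w4MaxB n (signedWord n π) i

/-- The number of negative letters of a signed permutation. -/
def negCount (n : ℕ) (π : SignedPerm n) : ℕ :=
  (Finset.univ.filter fun i => π.2 i = true).card

/-- `R_n^{B,>}(x)`. -/
noncomputable def runPolyBgt (n : ℕ) : Polynomial ℤ :=
  ∑ π : SignedPerm n, if 0 < signedWord n π 1 then X ^ runB n π else 0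

/-- `R_n^{B,<}(x)`. -/
noncomputable def runPolyBlt (n : ℕ) : Polynomial ℤ :=
  ∑ π : SignedPerm n, if signedWord n π 1 < 0 then X ^ runB n π else 0

/-- `R_n^{B}(x)`. -/
noncomputable def runPolyB (n : ℕ) : Polynomial ℤ :=
  ∑ π : SignedPerm n, X ^ runB n π

/-- `R_n^{D,>}(x)`. -/
noncomputable def runPolyDgt (n : ℕ) : Polynomial ℤ :=
  ∑ π : SignedPerm n, if Even (negCount n π) ∧ 0 < signedWord n π 1 then X ^ runB n π else 0

/-- `R_n^{D,<}(x)`. -/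
noncomputable def runPolyDlt (n : ℕ) : Polynomial ℤ :=
  ∑ π : SignedPerm n, if Even (negCount n π) ∧ signedWord n π 1 < 0 then X ^ runB n π else 0

/-- `R_n^{D}(x)`. -/
noncomputable def runPolyD (n : ℕ) : Polynomial ℤ :=
  ∑ π : SignedPerm n, if Even (negCount n π) then X ^ runB n π else 0

/-- The Eulerian polynomial `A_n(x) = ∑_{σ ∈ S_n} x^{des(σ)+1}`. -/
noncomputable def eulerianA (n : ℕ) : Polynomial ℤ :=
  ∑ σ : Equiv.Perm (Fin n), X ^ (desA n σ + 1)

/-- The type B Eulerian polynomial `B_n(x) = ∑_{π ∈ 𝔅_n} x^{des_B(π)}`. -/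
noncomputable def eulerianB (n : ℕ) : Polynomial ℤ :=
  ∑ π : SignedPerm n, X ^ desB n π

/-- `b̄_{n,k}` : the number of type B André permutations of length `n` with `des_B` equal
to `k`. -/
noncomputable def andreBCountDes (n k : ℕ) : ℕ :=
  Nat.card {π : SignedPerm n // IsAndreB n π ∧ desB n π = k}

/-- `b̂_{n,j}` : the number of type B André permutations of length `n` with exactly `j`
valleys. -/
noncomputable def andreBCountVal (n j : ℕ) : ℕ :=
  Nat.card {π : SignedPerm n // IsAndreB n π ∧ (valleysB n π).card = j}

/-- `d̃_{n,k}` : the number of type D André permutations of length `n` (type B André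
permutations with an even number of negative letters) with exactly `k` valleys. -/
noncomputable def andreDCountVal (n k : ℕ) : ℕ :=
  Nat.card {π : SignedPerm n //
    IsAndreB n π ∧ Even (negCount n π) ∧ (valleysB n π).card = k}

/-- The number of permutations of `[n]` with exactly `j` left peaks. -/
noncomputable def leftPeakCount (n j : ℕ) : ℕ :=
  Nat.card {σ : Equiv.Perm (Fin n) // (leftPeakSet n σ).card = j}

/-- `R_n` evaluated at a real number. -/
noncomputable def runPolyReal (n : ℕ) (x : ℝ) : ℝ :=
  ∑ σ : Equiv.Perm (Fin n), x ^ runA n σ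

/-- `A_n` evaluated at a real number. -/
noncomputable def eulerianAReal (n : ℕ) (x : ℝ) : ℝ :=
  ∑ σ : Equiv.Perm (Fin n), x ^ (desA n σ + 1)

/-- `R_n^{B,>}` evaluated at a real number. -/
noncomputable def runPolyBgtReal (n : ℕ) (x : ℝ) : ℝ :=
  ∑ π : SignedPerm n, if 0 < signedWord n π 1 then x ^ runB n π else 0

/-- `B_n` evaluated at a real number. -/
noncomputable def eulerianBReal (n : ℕ) (x : ℝ) : ℝ :=
  ∑ π : SignedPerm n, x ^ desB n π

/-!
Inserting the letter `n + 1` into a permutation of `[n]` gives the recurrence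
`R_{n+1} = X ((n - 1) X + 2) R_n + X (1 - X²) R_n'`. In the basis `X^i (1 + X)^{n-1-i}` of forms of
degree `n - 1` in `X` and `1 + X` it sends the `i`-th basis element to
`i X^i (1 + X)^{n-i} + (n + 1 - 2i) X^{i+1} (1 + X)^{n-1-i}`. The factor `n + 1 - 2i` keeps the
coefficients nonnegative and stops `i` from ever exceeding `⌊(n+1)/2⌋`. So
`(1 + X)^{n-1-⌊(n+1)/2⌋}` divides `R_n`, and the value of the quotient at `-1` is, up to sign, the
coefficient with `i = ⌊(n+1)/2⌋`, which is positive.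
-/

section BooleanWords

/-- The number of adjacent unequal pairs in the Boolean word `d 0, …, d k` (of length `k + 1`). -/
def changeCount (k : ℕ) (d : ℕ → Bool) : ℕ :=
  #{j ∈ range k | d j ≠ d (j + 1)}

/-- The descent word (`true` marks a descent) obtained from the descent word `d` when a new largest
letter is inserted after the first `p` letters: step `p - 1` is replaced by an ascent followed by a
descent. At either end of the word only the half of this peak that exists is inserted. -/
def insertPeak (d : ℕ → Bool) (p j : ℕ) : Bool :=
  if j + 1 < p then d j else if j + 1 = p then false else if j = p then true else d (j - 1)

variable (d : ℕ → Bool)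

theorem changeCount_zero : changeCount 0 d = 0 := rfl

theorem changeCount_succ (k : ℕ) :
    changeCount (k + 1) d = changeCount k d + if d k ≠ d (k + 1) then 1 else 0 := by
  simp only [changeCount, card_filter, sum_range_succ]

variable {d} in
theorem changeCount_congr {k : ℕ} {e : ℕ → Bool} (h : ∀ j ≤ k, d j = e j) :
    changeCount k d = changeCount k e := by
  refine congrArg card (filter_congr fun j hj => ?_)
  rw [mem_range] at hj
  rw [h j hj.le, h (j + 1) hj]

theorem insertPeak_of_succ_lt {p j : ℕ} (h : j + 1 < p) : insertPeak d p j = d j :=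
  if_pos h

theorem insertPeak_succ_self (j : ℕ) : insertPeak d (j + 1) j = false := by
  simp [insertPeak]

theorem insertPeak_self (p : ℕ) : insertPeak d p p = true := by
  simp [insertPeak]

theorem insertPeak_succ_of_le {p j : ℕ} (h : p ≤ j) : insertPeak d p (j + 1) = d j := by
  grind [insertPeak]

theorem changeCount_insertPeak_of_le {k p : ℕ} (h : p ≤ k) :
    changeCount (k + 2) (insertPeak d p) =
      changeCount (k + 1) (insertPeak d p) + if d k ≠ d (k + 1) then 1 else 0 := by
  rw [changeCount_succ, insertPeak_succ_of_le d h, insertPeak_succ_of_le d (h.trans k.le_succ)]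

theorem changeCount_insertPeak_penultimate (k : ℕ) :
    changeCount (k + 2) (insertPeak d (k + 1)) =
      changeCount (k + 1) (insertPeak d (k + 1)) + if d (k + 1) then 0 else 1 := by
  rw [changeCount_succ, insertPeak_self, insertPeak_succ_of_le d le_rfl]
  cases d (k + 1) <;> rfl

theorem changeCount_insertPeak_last_of_ascent {k : ℕ} (hk : d k = false) :
    changeCount (k + 1) (insertPeak d (k + 1)) = changeCount k d + 1 := by
  have agree : ∀ j ≤ k, insertPeak d (k + 1) j = d j := fun j hj => by
    rcases hj.lt_or_eq with hlt | rfl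
    · exact insertPeak_of_succ_lt d (by omega)
    · rw [insertPeak_succ_self, hk]
  rw [changeCount_succ, changeCount_congr agree, insertPeak_succ_self, insertPeak_self]
  rfl

theorem changeCount_insertPeak_append (k : ℕ) :
    changeCount (k + 1) (insertPeak d (k + 2)) = changeCount k d + if d k then 1 else 0 := by
  have agree : ∀ j ≤ k, insertPeak d (k + 2) j = d j := fun j hj =>
    insertPeak_of_succ_lt d (by omega)
  rw [changeCount_succ, changeCount_congr agree, agree k le_rfl, insertPeak_succ_self]
  cases d k <;> rfl

theorem changeCount_insertPeak_last (k : ℕ) :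
    changeCount (k + 2) (insertPeak d (k + 2)) =
      changeCount k d + (if d k then 1 else 0) + 1 := by
  rw [changeCount_succ, changeCount_insertPeak_append, insertPeak_succ_self, insertPeak_self]
  rfl

variable {R : Type*} [CommRing R] (x : R)

theorem sum_pow_changeCount_insertPeak_except_append (k : ℕ) :
    ∑ p ∈ range (k + 2), x ^ changeCount (k + 1) (insertPeak d p) =
      x ^ changeCount k d *
        (changeCount k d + 1 + 2 * x + (k - changeCount k d) * x ^ 2 - if d k then x else 1) := by
  induction k with
  | zero =>
    simp only [sum_range_succ, sum_range_zero, changeCount_succ, changeCount_zero, insertPeak]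
    cases d 0 <;> grind
  | succ k ih =>
    have earlier_slots : ∑ p ∈ range (k + 1), x ^ changeCount (k + 2) (insertPeak d p) =
        x ^ (if d k ≠ d (k + 1) then 1 else 0) *
          ∑ p ∈ range (k + 1), x ^ changeCount (k + 1) (insertPeak d p) := by
      rw [mul_sum]
      refine sum_congr rfl fun p hp => ?_
      rw [changeCount_insertPeak_of_le d (by grind), pow_add, mul_comm]
    have ascent_slot := changeCount_insertPeak_last_of_ascent d (k := k)
    rw [sum_range_succ] at ih
    rw [sum_range_succ, sum_range_succ, earlier_slots, eq_sub_of_add_eq ih,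
      changeCount_insertPeak_penultimate, changeCount_insertPeak_last, changeCount_succ d k]
    -- If `d k` is a descent, the terms in `a` cancel, so `a` need only be known after an ascent.
    generalize changeCount (k + 1) (insertPeak d (k + 1)) = a at ascent_slot ⊢
    cases hk : d k <;> cases hk' : d (k + 1) <;> grind

theorem sum_pow_changeCount_insertPeak (k : ℕ) :
    ∑ p ∈ range (k + 3), x ^ changeCount (k + 1) (insertPeak d p) =
      x ^ changeCount k d * (changeCount k d + 1 + 2 * x + (k - changeCount k d) * x ^ 2) := by
  rw [sum_range_succ, sum_pow_changeCount_insertPeak_except_append, changeCount_insertPeak_append]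
  cases d k <;> grind

end BooleanWords

section IntegerWords

/-- The descent word of `w 1, w 2, …`; entry `j` compares the letters at positions `j + 1` and
`j + 2`, because the words `permWord` are indexed from `1`. -/
def descentWord (w : ℕ → ℤ) (j : ℕ) : Bool :=
  decide (w (j + 2) < w (j + 1))

/-- The word obtained from `w` by inserting the letter `a` at position `p`. -/
def insertLetter (w : ℕ → ℤ) (p : ℕ) (a : ℤ) (i : ℕ) : ℤ :=
  if i < p then w i else if i = p then a else w (i - 1)

theorem changesDir_add_two_iff {w : ℕ → ℤ} {j : ℕ} (h₁ : w (j + 1) ≠ w (j + 2))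
    (h₂ : w (j + 2) ≠ w (j + 3)) :
    changesDir w (j + 2) ↔ descentWord w j ≠ descentWord w (j + 1) := by
  simp only [changesDir, descentWord, ne_eq, decide_eq_decide, Nat.add_assoc, Nat.reduceAdd,
    Nat.add_succ_sub_one]
  omega

theorem card_filter_changesDir {w : ℕ → ℤ} {k : ℕ} (hw : ∀ j ≤ k, w (j + 1) ≠ w (j + 2)) :
    #{i ∈ Icc 2 (k + 1) | changesDir w i} = changeCount k (descentWord w) := by
  have shift : Icc 2 (k + 1) = (range k).map (addRightEmbedding 2) := by
    rw [range_eq_Ico, map_add_right_Ico]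
    grind
  rw [shift, filter_map, card_map, changeCount]
  refine congrArg card (filter_congr fun j hj => ?_)
  rw [mem_range] at hj
  exact changesDir_add_two_iff (hw j hj.le) (hw (j + 1) hj)

theorem descentWord_insertLetter {w : ℕ → ℤ} {a : ℤ} (hw : ∀ i, w i < a) (p j : ℕ) :
    descentWord (insertLetter w (p + 1) a) j = insertPeak (descentWord w) p j := by
  have := hw (j + 1)
  have := hw (j + 2)
  grind [descentWord, insertLetter, insertPeak]

end IntegerWords

section Permutations

variable {n : ℕ}

theorem permWord_injOn (σ : Equiv.Perm (Fin n)) : Set.InjOn (permWord n σ) (Set.Icc 1 n) := by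
  intro i hi j hj h
  simp only [permWord, dif_pos hi.out, dif_pos hj.out, add_left_inj, Nat.cast_inj, Fin.val_inj,
    σ.injective.eq_iff, Fin.mk.injEq] at h
  have := hi.1
  have := hj.1
  omega

theorem permWord_lt (σ : Equiv.Perm (Fin n)) (i : ℕ) : permWord n σ i < n + 1 := by
  unfold permWord
  split_ifs <;> omega

theorem runA_add_two (k : ℕ) (σ : Equiv.Perm (Fin (k + 2))) :
    runA (k + 2) σ = 1 + changeCount k (descentWord (permWord (k + 2) σ)) := by
  have adjacent_ne : ∀ j ≤ k, permWord (k + 2) σ (j + 1) ≠ permWord (k + 2) σ (j + 2) :=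
    fun j hj h => by
      have := permWord_injOn σ ⟨by omega, by omega⟩ ⟨by omega, by omega⟩ h
      omega
  rw [runA, ← card_filter_changesDir adjacent_ne]
  rfl

/-- The permutation of `[n + 1]` whose word is that of `σ` with the letter `n + 1` inserted after
the first `p` letters. -/
def insertMax (p : Fin (n + 1)) (σ : Equiv.Perm (Fin n)) : Equiv.Perm (Fin (n + 1)) :=
  ((finSuccEquiv' p).trans (Equiv.optionCongr σ)).trans (finSuccEquiv' (Fin.last n)).symm

theorem insertMax_self (p : Fin (n + 1)) (σ : Equiv.Perm (Fin n)) :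
    insertMax p σ p = Fin.last n := by
  simp [insertMax]

theorem insertMax_succAbove (p : Fin (n + 1)) (σ : Equiv.Perm (Fin n)) (i : Fin n) :
    insertMax p σ (p.succAbove i) = (σ i).castSucc := by
  simp [insertMax]

theorem insertMax_injective :
    Function.Injective fun q : Fin (n + 1) × Equiv.Perm (Fin n) => insertMax q.1 q.2 := by
  rintro ⟨p, σ⟩ ⟨p', σ'⟩ (h : insertMax p σ = insertMax p' σ')
  obtain rfl : p = p' := by
    apply (insertMax p' σ').injective
    rw [insertMax_self, ← h, insertMax_self]
  refine Prod.ext rfl (Equiv.ext fun i => Fin.castSucc_injective n ?_)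
  rw [← insertMax_succAbove p, h, insertMax_succAbove]

theorem insertMax_bijective :
    Function.Bijective fun q : Fin (n + 1) × Equiv.Perm (Fin n) => insertMax q.1 q.2 :=
  (Fintype.bijective_iff_injective_and_card _).2
    ⟨insertMax_injective, by simp [Fintype.card_perm, Nat.factorial_succ]⟩

theorem permWord_succ_val (σ : Equiv.Perm (Fin n)) (i : Fin n) :
    permWord n σ (i + 1) = (σ i : ℤ) + 1 := by
  simp [permWord, Nat.succ_le_of_lt i.isLt]

theorem permWord_insertMax (p : Fin (n + 1)) (σ : Equiv.Perm (Fin n)) {i : ℕ} (hi : i ≤ n) :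
    permWord (n + 1) (insertMax p σ) (i + 1) =
      insertLetter (permWord n σ) (p + 1) (n + 1) (i + 1) := by
  obtain ⟨i, rfl⟩ : ∃ i' : Fin (n + 1), (i' : ℕ) = i := ⟨⟨i, by omega⟩, rfl⟩
  rw [permWord_succ_val]
  rcases Fin.eq_self_or_eq_succAbove p i with rfl | ⟨i, rfl⟩
  · simp [insertMax_self, insertLetter]
  · rw [insertMax_succAbove, Fin.val_castSucc, ← permWord_succ_val]
    rcases lt_or_ge i.castSucc p with hip | hip
    · rw [Fin.succAbove_of_castSucc_lt _ _ hip]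
      have : (i : ℕ) < p := hip
      grind [insertLetter]
    · rw [Fin.succAbove_of_le_castSucc _ _ hip]
      have : (p : ℕ) ≤ i := hip
      grind [insertLetter]

theorem runA_insertMax (k : ℕ) (p : Fin (k + 3)) (σ : Equiv.Perm (Fin (k + 2))) :
    runA (k + 3) (insertMax p σ) =
      1 + changeCount (k + 1) (insertPeak (descentWord (permWord (k + 2) σ)) p) := by
  rw [runA_add_two (k + 1)]
  congr 1
  refine changeCount_congr fun j hj => ?_
  rw [← descentWord_insertLetter (permWord_lt σ), descentWord, descentWord,
    permWord_insertMax p σ (by omega : j + 1 ≤ k + 2), permWord_insertMax p σ (by omega)]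

end Permutations

section Recurrence

variable {R : Type*} [CommRing R]

variable (R) in
/-- The operator that takes `R_n` to `R_{n+1}` for `n = N + 1`. -/
noncomputable def recOperator (N : ℕ) : R[X] →ₗ[R] R[X] :=
  LinearMap.mulLeft R (X * ((N : R[X]) * X + 2)) +
    LinearMap.mulLeft R (X * (1 - X ^ 2)) ∘ₗ derivative

theorem recOperator_apply (N : ℕ) (f : R[X]) :
    recOperator R N f = X * ((N : R[X]) * X + 2) * f + X * (1 - X ^ 2) * derivative f := rfl

theorem sum_pow_runA_insertMax (k : ℕ) (σ : Equiv.Perm (Fin (k + 2))) :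
    ∑ p, (X : ℤ[X]) ^ runA (k + 3) (insertMax p σ) =
      recOperator ℤ (k + 1) (X ^ runA (k + 2) σ) := by
  simp only [runA_insertMax, pow_add, pow_one]
  rw [← mul_sum, Fin.sum_univ_eq_sum_range
    (fun p => (X : ℤ[X]) ^ changeCount (k + 1) (insertPeak (descentWord (permWord (k + 2) σ)) p)),
    sum_pow_changeCount_insertPeak, runA_add_two, recOperator_apply, derivative_X_pow,
    Nat.add_sub_cancel_left]
  push_cast
  simp only [map_add, map_one, map_natCast]
  ring

theorem runPoly_add_three (k : ℕ) :
    runPoly (k + 3) = recOperator ℤ (k + 1) (runPoly (k + 2)) := by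
  rw [runPoly, ← insertMax_bijective.sum_comp, Fintype.sum_prod_type_right, runPoly, map_sum]
  exact sum_congr rfl fun σ _ => sum_pow_runA_insertMax k σ

theorem runPoly_two : runPoly 2 = 2 * X := by
  have runA_two (σ : Equiv.Perm (Fin 2)) : runA 2 σ = 1 := by simp [runA]
  simp [runPoly, runA_two, Fintype.card_perm]

end Recurrence

section Forms

variable {R : Type*} [CommRing R]

/-- The form `∑ i, c i * X ^ i * (1 + X) ^ (N - i)` of degree `N` in `X` and `1 + X`. -/
noncomputable def binaryForm (c : ℕ → R) (N : ℕ) : R[X] :=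
  ∑ p ∈ antidiagonal N, c p.1 • (X ^ p.1 * (1 + X) ^ p.2)

/-- The action of `recOperator N` on the coefficients of forms of degree `N` in `X` and `1 + X`. -/
def recCoeff (N : ℕ) (c : ℕ → R) : ℕ → R
  | 0 => 0
  | i + 1 => (i + 1) * c (i + 1) + (N + 2 - 2 * i) * c i

theorem binaryForm_succ (c : ℕ → R) (N : ℕ) :
    binaryForm c (N + 1) = c (N + 1) • X ^ (N + 1) + (1 + X) * binaryForm c N := by
  rw [binaryForm, Nat.sum_antidiagonal_succ', binaryForm, mul_sum]
  simp only [pow_zero, mul_one, pow_succ (1 + X : R[X]), mul_smul_comm]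
  congr! 3
  ring

theorem binaryForm_add {c : ℕ → R} {d : ℕ} (hc : ∀ i, d < i → c i = 0) (m : ℕ) :
    binaryForm c (d + m) = (1 + X) ^ m * binaryForm c d := by
  induction m with
  | zero => simp
  | succ m ih =>
    rw [← Nat.add_assoc, binaryForm_succ, hc _ (by omega), zero_smul, zero_add, ih]
    ring

theorem eval_neg_one_binaryForm (c : ℕ → R) (d : ℕ) :
    (binaryForm c d).eval (-1) = c d * (-1) ^ d := by
  cases d with
  | zero => simp [binaryForm]
  | succ d => simp [binaryForm_succ]

theorem mul_derivative_pow (f : R[X]) (i : ℕ) :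
    f * derivative (f ^ i) = (i : R[X]) * f ^ i * derivative f := by
  cases i with
  | zero => simp
  | succ i =>
    rw [derivative_pow_succ, map_add, map_natCast, map_one]
    push_cast
    ring

theorem recOperator_X_pow_mul_one_add_X_pow (i j : ℕ) :
    recOperator R (i + j) (X ^ i * (1 + X) ^ j) =
      (i : R) • (X ^ i * (1 + X) ^ (j + 1)) +
        (((i + j : ℕ) : R) + 2 - 2 * i) • (X ^ (i + 1) * (1 + X) ^ j) := by
  simp only [recOperator_apply, derivative_mul, smul_eq_C_mul, map_sub, map_add, map_mul,
    map_natCast, map_ofNat]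
  push_cast
  have deriv_left := mul_derivative_pow (X : R[X]) i
  have deriv_right := mul_derivative_pow (1 + X : R[X]) j
  simp only [derivative_add, derivative_one, derivative_X, zero_add, mul_one]
    at deriv_left deriv_right ⊢
  linear_combination (1 - X ^ 2) * (1 + X) ^ j * deriv_left +
    X * (1 - X) * X ^ i * deriv_right

theorem recOperator_binaryForm {c : ℕ → R} {N : ℕ} (hc : c (N + 1) = 0) :
    recOperator R N (binaryForm c N) = binaryForm (recCoeff N c) (N + 1) := by
  have shift : ∑ p ∈ antidiagonal N, ((p.1 : R) * c p.1) • (X ^ p.1 * (1 + X : R[X]) ^ (p.2 + 1)) =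
      ∑ p ∈ antidiagonal N,
        (((p.1 : R) + 1) * c (p.1 + 1)) • (X ^ (p.1 + 1) * (1 + X) ^ p.2) := by
    have top := Nat.sum_antidiagonal_succ' (n := N)
      (f := fun p => ((p.1 : R) * c p.1) • (X ^ p.1 * (1 + X : R[X]) ^ p.2))
    have bottom := Nat.sum_antidiagonal_succ (n := N)
      (f := fun p => ((p.1 : R) * c p.1) • (X ^ p.1 * (1 + X : R[X]) ^ p.2))
    simpa [hc] using top.symm.trans bottom
  rw [binaryForm, binaryForm, map_sum, Nat.sum_antidiagonal_succ]
  simp only [recCoeff, zero_smul, zero_add, add_smul, sum_add_distrib]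
  rw [← shift, ← sum_add_distrib]
  refine sum_congr rfl fun p hp => ?_
  rw [map_smul, ← mem_antidiagonal.1 hp, recOperator_X_pow_mul_one_add_X_pow, smul_add, smul_smul,
    smul_smul, mul_comm (c p.1), mul_comm (c p.1)]

end Forms

section Coefficients

/-- The coefficients of `R_{k+2}` in the basis `X ^ i * (1 + X) ^ (k + 1 - i)`. -/
def runCoeff : ℕ → ℕ → ℤ
  | 0 => Pi.single 1 2
  | k + 1 => recCoeff (k + 1) (runCoeff k)

theorem runCoeff_succ_succ (k i : ℕ) :
    runCoeff (k + 1) (i + 1) =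
      (i + 1) * runCoeff k (i + 1) + (k + 3 - 2 * i) * runCoeff k i := by
  simp only [runCoeff, recCoeff]
  push_cast
  ring

theorem runCoeff_eq_zero {k i : ℕ} (h : (k + 3) / 2 < i) : runCoeff k i = 0 := by
  induction k generalizing i with
  | zero => exact Pi.single_eq_of_ne (by omega) _
  | succ k ih =>
    obtain ⟨i, rfl⟩ := Nat.exists_eq_succ_of_ne_zero (Nat.ne_zero_of_lt h)
    rw [Nat.succ_eq_add_one, runCoeff_succ_succ, ih (by omega), mul_zero, zero_add, mul_eq_zero]
    by_cases hi : (k + 3) / 2 < i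
    · exact .inr (ih hi)
    · left
      omega

theorem runCoeff_nonneg (k i : ℕ) : 0 ≤ runCoeff k i := by
  induction k generalizing i with
  | zero => exact (Pi.single_nonneg (α := fun _ => ℤ)).2 zero_le_two i
  | succ k ih =>
    cases i with
    | zero => rfl
    | succ i =>
      rw [runCoeff_succ_succ]
      have first_nonneg : 0 ≤ ((i : ℤ) + 1) * runCoeff k (i + 1) := mul_nonneg (by omega) (ih _)
      by_cases hi : (k + 3) / 2 < i
      · rwa [runCoeff_eq_zero hi, mul_zero, add_zero]
      · exact add_nonneg first_nonneg (mul_nonneg (by omega) (ih i))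

theorem runCoeff_top_pos (k : ℕ) : 0 < runCoeff k ((k + 3) / 2) := by
  induction k with
  | zero => decide
  | succ k ih =>
    rcases Nat.even_or_odd' k with ⟨t, rfl | rfl⟩
    · rw [show (2 * t + 3) / 2 = t + 1 by omega] at ih
      rw [show (2 * t + 1 + 3) / 2 = t + 1 + 1 by omega, runCoeff_succ_succ,
        runCoeff_eq_zero (by omega : (2 * t + 3) / 2 < t + 1 + 1)]
      push_cast
      linarith
    · rw [show (2 * t + 1 + 3) / 2 = t + 1 + 1 by omega] at ih
      rw [show (2 * t + 1 + 1 + 3) / 2 = t + 1 + 1 by omega, runCoeff_succ_succ]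
      refine add_pos_of_pos_of_nonneg (by positivity) (mul_nonneg ?_ (runCoeff_nonneg _ _))
      push_cast
      linarith

theorem runPoly_eq_binaryForm (k : ℕ) : runPoly (k + 2) = binaryForm (runCoeff k) (k + 1) := by
  induction k with
  | zero =>
    rw [runPoly_two]
    simp [binaryForm_succ _ 0, binaryForm.eq_def _ 0, runCoeff, smul_eq_C_mul]
  | succ k ih =>
    rw [runPoly_add_three, ih, recOperator_binaryForm (runCoeff_eq_zero (by omega)), runCoeff]

end Coefficients

/-- For `n ≥ 2`, `−1` is a root of `R_n(x)` of multiplicity exactly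
`⌊(n−2)/2⌋`: `(1+x)^{⌊(n−2)/2⌋}` divides `R_n(x)` and the quotient does not vanish at
`x = −1`. -/
theorem statement7 (n : ℕ) (hn : 2 ≤ n) :
    ∃ Q : Polynomial ℤ, runPoly n = (1 + X) ^ ((n - 2) / 2) * Q ∧ Q.eval (-1) ≠ 0 := by
  obtain ⟨k, rfl⟩ := Nat.exists_eq_add_of_le' hn
  have degree_split : k + 1 = (k + 3) / 2 + (k + 2 - 2) / 2 := by omega
  refine ⟨binaryForm (runCoeff k) ((k + 3) / 2), ?_, ?_⟩
  · rw [runPoly_eq_binaryForm, degree_split, binaryForm_add fun i => runCoeff_eq_zero]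
  · rw [eval_neg_one_binaryForm]
    exact mul_ne_zero (runCoeff_top_pos k).ne' (pow_ne_zero _ (by decide))
end

section
/- (Chow–Ma identity) For every n ≥ 1, the polynomial identity x · 2^{n−1} R_{n+1}(x) = 2x R_n^{B,>}(x) + (1+x) Σ_{k=1}^{n−1} C(n,k) R_k^{B,>}(x) R_{n−k}^{B,>}(x) holds, where C(n,k) is the binomial coefficient. -/
open Finset Polynomial

/-!
Count the words containing `0` and, for every `i ∈ [n]`, exactly one of `i` and `-i`, by their
number of turns. For each of the `2 ^ n` choices of signs the letters form a chain of `n + 1`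
elements, so the generating polynomial is `2 ^ n R_{n+1}(x) / x`. Now cut each word at `0` into
`u.reverse ++ 0 :: v`. Its turns are those of `0 u`, those of `0 v` and possibly one at `0`, which
occurs exactly when `u` and `v` start with the same sign. Since negation preserves turns, `k`
letters in `u` and `n - k` in `v` contribute
`2 (1 + x) C(n,k) (R_k^{B,>}(x) / x) (R_{n-k}^{B,>}(x) / x)` if `0 < k < n`, and
`2 R_n^{B,>}(x) / x` if `k = 0` or `k = n`.
-/

section TurnCount

variable {ι α β : Type*} [LinearOrder α] [LinearOrder β]

/-- The number of letters of a word at which it changes direction, its first and last letters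
not being counted; the number of alternating runs is one more. -/
def turnCount : List α → ℕ
  | a :: b :: c :: l => (if (a < b ∧ c < b) ∨ (b < a ∧ b < c) then 1 else 0) +
      turnCount (b :: c :: l)
  | _ => 0

lemma turnCount_append_cons_cons (u : List α) (a b : α) (v : List α) :
    turnCount (u ++ a :: b :: v) = turnCount (u ++ [a, b]) + turnCount (a :: b :: v) := by
  induction u with
  | nil => simp [turnCount]
  | cons x u ih =>
    match u with
    | [] => simp [turnCount]
    | [y] => simp only [List.cons_append, List.nil_append, turnCount] at ih ⊢; omega
    | y :: z :: u => simp only [List.cons_append, turnCount] at ih ⊢; omega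

lemma turnCount_reverse (l : List α) : turnCount l.reverse = turnCount l := by
  fun_induction turnCount l with
  | case1 a b c l ih =>
    have cut := turnCount_append_cons_cons l.reverse c b [a]
    simp only [List.reverse_cons, List.append_assoc, List.cons_append, List.nil_append] at ih ⊢
    rw [cut, ih, add_comm]
    simp only [turnCount, add_zero]
    grind
  | case2 l h =>
    match l with
    | [] | [_] | [_, _] => rfl
    | a :: b :: c :: l => exact (h a b c l rfl).elim

lemma turnCount_map_congr {f : ι → α} {g : ι → β} (h : ∀ i j, f i < f j ↔ g i < g j)
    (l : List ι) : turnCount (l.map f) = turnCount (l.map g) := by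
  match l with
  | [] | [_] | [_, _] => rfl
  | i :: j :: k :: l =>
    have ih := turnCount_map_congr h (j :: k :: l)
    simp only [List.map_cons, turnCount, h] at ih ⊢
    rw [ih]

lemma turnCount_ofFn_congr {n : ℕ} {f : Fin n → α} {g : Fin n → β}
    (h : ∀ i j, f i < f j ↔ g i < g j) : turnCount (List.ofFn f) = turnCount (List.ofFn g) := by
  simp only [List.ofFn_eq_map, turnCount_map_congr h]

lemma turnCount_map_neg [AddCommGroup α] [IsOrderedAddMonoid α] (l : List α) :
    turnCount (l.map (- ·)) = turnCount l := by
  match l with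
  | [] | [_] | [_, _] => rfl
  | a :: b :: c :: l =>
    have ih := turnCount_map_neg (b :: c :: l)
    simp only [List.map_cons, turnCount, neg_lt_neg_iff] at ih ⊢
    rw [ih]
    grind

lemma turnCount_reverse_append_cons (z a b : α) (u v : List α) :
    turnCount ((a :: u).reverse ++ z :: b :: v) =
      turnCount (z :: a :: u) + turnCount (z :: b :: v) +
        if (a < z ∧ b < z) ∨ (z < a ∧ z < b) then 1 else 0 := by
  have cut_z := turnCount_append_cons_cons (a :: u).reverse z b v
  have cut_a := turnCount_append_cons_cons u.reverse a z [b]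
  have flip := turnCount_reverse (z :: a :: u)
  simp only [List.reverse_cons, List.append_assoc, List.cons_append, List.nil_append] at *
  simp only [cut_z, cut_a, flip, turnCount]
  omega

lemma turnCount_map_range' (w : ℕ → ℤ) (a n : ℕ) :
    turnCount ((List.range' a n).map w) = #{i ∈ Icc (a + 1) (a + n - 2) | changesDir w i} := by
  match n with
  | 0 | 1 | 2 => simp [List.range', turnCount]
  | n + 3 =>
    have ih := turnCount_map_range' w (a + 1) (n + 2)
    have split_first : Icc (a + 1) (a + (n + 3) - 2) =
        insert (a + 1) (Icc (a + 1 + 1) (a + 1 + (n + 2) - 2)) := by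
      ext i; simp only [mem_Icc, mem_insert]; omega
    simp only [List.range'_succ, List.map_cons, turnCount] at ih ⊢
    rw [ih, split_first, filter_insert]
    have turn_iff : (w a < w (a + 1) ∧ w (a + 1 + 1) < w (a + 1)) ∨
        (w (a + 1) < w a ∧ w (a + 1) < w (a + 1 + 1)) ↔ changesDir w (a + 1) := Iff.rfl
    simp only [turn_iff]
    split_ifs
    · rw [card_insert_of_notMem (by simp), add_comm]
    · rw [zero_add]

lemma turnCount_ofFn_nat (w : ℕ → ℤ) (a n : ℕ) :
    turnCount (List.ofFn fun i : Fin n ↦ w (a + i)) =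
      #{i ∈ Icc (a + 1) (a + n - 2) | changesDir w i} := by
  rw [← turnCount_map_range']
  congr 1
  exact List.ext_getElem (by simp) (by simp)

end TurnCount

section Arrangements

variable {α β M : Type*} [AddCommMonoid M]

/-- The words in which every letter of `S` occurs exactly once and no other letter occurs. -/
def arrangements (S : Finset α) : Finset (List α) :=
  ⟨S.val.lists, Multiset.lists_nodup_finset S⟩

lemma mem_arrangements {S : Finset α} {l : List α} :
    l ∈ arrangements S ↔ (l : Multiset α) = S.val := by
  classical exact (Multiset.mem_lists_iff S.val l).trans eq_comm

lemma mem_iff_of_mem_arrangements {S : Finset α} {l : List α} (hl : l ∈ arrangements S) {a : α} :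
    a ∈ l ↔ a ∈ S := by
  rw [← Multiset.mem_coe, mem_arrangements.1 hl, mem_val]

lemma nodup_of_mem_arrangements {S : Finset α} {l : List α} (hl : l ∈ arrangements S) :
    l.Nodup := by
  rw [← Multiset.coe_nodup, mem_arrangements.1 hl]
  exact S.nodup

lemma length_of_mem_arrangements {S : Finset α} {l : List α} (hl : l ∈ arrangements S) :
    l.length = #S := by
  rw [← Multiset.coe_card, mem_arrangements.1 hl, card_val]

lemma arrangements_empty : arrangements (∅ : Finset α) = {[]} := by
  ext l
  simp [mem_arrangements]

lemma sum_arrangements_reverse (S : Finset α) (f : List α → M) :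
    ∑ l ∈ arrangements S, f l.reverse = ∑ l ∈ arrangements S, f l :=
  sum_nbij' List.reverse List.reverse (by simp [mem_arrangements]) (by simp [mem_arrangements])
    (by simp) (by simp) (by simp)

lemma sum_arrangements_map (e : α ↪ β) (S : Finset α) (f : List β → M) :
    ∑ l ∈ arrangements (S.map e), f l = ∑ l ∈ arrangements S, f (l.map e) := by
  have map_eq : arrangements (S.map e) =
      (arrangements S).map ⟨List.map e, List.map_injective_iff.2 e.injective⟩ := by
    ext l
    simp only [mem_map, Function.Embedding.coeFn_mk, mem_arrangements, map_val]
    constructor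
    · intro hl
      have in_range : ∀ b ∈ l, b ∈ Set.range e := fun b hb ↦ by
        obtain ⟨a, -, rfl⟩ := Multiset.mem_map.1 (hl ▸ Multiset.mem_coe.2 hb)
        exact Set.mem_range_self a
      obtain ⟨l, rfl⟩ : l ∈ Set.range (List.map e) := by rwa [Set.range_list_map]
      exact ⟨l, Multiset.map_injective e.injective (by simpa using hl), rfl⟩
    · rintro ⟨l, hl, rfl⟩
      rw [← hl, Multiset.map_coe]
  rw [map_eq, sum_map]
  rfl

lemma sum_perm_ofFn (n : ℕ) (f : List (Fin n) → M) :
    ∑ σ : Equiv.Perm (Fin n), f (List.ofFn σ) = ∑ l ∈ arrangements univ, f l := by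
  refine sum_bij (fun σ _ ↦ List.ofFn σ) (fun σ _ ↦ ?_) (fun σ _ τ _ h ↦ ?_) (fun l hl ↦ ?_)
    fun _ _ ↦ rfl
  · rw [mem_arrangements]
    have ofFn_nodup : (List.ofFn σ : Multiset (Fin n)).Nodup :=
      Multiset.coe_nodup.2 (List.nodup_ofFn.2 σ.injective)
    refine (Multiset.Nodup.ext ofFn_nodup univ.nodup).2 fun i ↦ ?_
    simpa using ⟨σ.symm i, σ.apply_symm_apply i⟩
  · exact DFunLike.coe_injective (List.ofFn_injective h)
  · have length_eq : n = l.length := by rw [length_of_mem_arrangements hl, card_fin]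
    let enumeration : Fin l.length ≃ Fin n :=
      (nodup_of_mem_arrangements hl).getEquivOfForallMemList l
        fun i ↦ (mem_iff_of_mem_arrangements hl).2 (mem_univ i)
    exact ⟨(finCongr length_eq).trans enumeration, mem_univ _,
      List.ext_getElem (by simp [length_eq.symm]) (by simp [enumeration])⟩

variable [DecidableEq α]

lemma append_cons_mem_arrangements_insert {S : Finset α} {a : α} {u v : List α} (ha : a ∉ S) :
    u ++ a :: v ∈ arrangements (insert a S) ↔
      ∃ P ⊆ S, u ∈ arrangements P ∧ v ∈ arrangements (S \ P) := by
  have cancel_a : u ++ a :: v ∈ arrangements (insert a S) ↔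
      (u + v : Multiset α) = S.val := by
    rw [mem_arrangements, insert_val_of_notMem ha, ← Multiset.coe_add, ← Multiset.cons_coe,
      Multiset.add_cons, Multiset.cons_inj_right]
  simp only [cancel_a, mem_arrangements, sdiff_val]
  constructor
  · intro h
    have u_le : (u : Multiset α) ≤ S.val := h ▸ Multiset.le_add_right _ _
    refine ⟨⟨u, Multiset.nodup_of_le u_le S.nodup⟩, val_le_iff.1 u_le, rfl, ?_⟩
    exact (tsub_eq_of_eq_add_rev h.symm).symm
  · rintro ⟨P, hP, hu, hv⟩
    rw [hu, hv, add_tsub_cancel_of_le (val_le_iff.2 hP)]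

lemma sum_arrangements_insert {S : Finset α} {a : α} (ha : a ∉ S) (f : List α → M) :
    ∑ l ∈ arrangements (insert a S), f l =
      ∑ P ∈ S.powerset, ∑ u ∈ arrangements P, ∑ v ∈ arrangements (S \ P), f (u ++ a :: v) := by
  simp_rw [← sum_product', sum_sigma']
  symm
  refine sum_bij (fun x _ ↦ x.2.1 ++ a :: x.2.2) ?_ ?_ ?_ fun _ _ ↦ rfl
  · rintro ⟨P, u, v⟩ h
    simp only [mem_sigma, mem_powerset, mem_product] at h
    exact (append_cons_mem_arrangements_insert ha).2 ⟨P, h⟩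
  · rintro ⟨P, u, v⟩ h ⟨P', u', v'⟩ h' heq
    simp only [mem_sigma, mem_powerset, mem_product] at h h' heq
    have a_notMem {Q : Finset α} {w : List α} (hQ : Q ⊆ S) (hw : w ∈ arrangements Q) : a ∉ w :=
      fun haw ↦ ha (hQ ((mem_iff_of_mem_arrangements hw).1 haw))
    obtain ⟨rfl, -, rfl⟩ := (List.append_cons_inj_of_notMem (a_notMem h.1 h.2.1)
      (a_notMem sdiff_subset h.2.2)).1 heq
    obtain rfl : P = P' := val_injective <|
      (mem_arrangements.1 h.2.1).symm.trans (mem_arrangements.1 h'.2.1)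
    rfl
  · intro l hl
    obtain ⟨u, v, rfl⟩ := List.append_of_mem
      ((mem_iff_of_mem_arrangements hl).2 (mem_insert_self a S))
    obtain ⟨P, h⟩ := (append_cons_mem_arrangements_insert ha).1 hl
    exact ⟨⟨P, u, v⟩, by simpa using h, rfl⟩

end Arrangements

section TurnPoly

variable {α : Type*} [LinearOrder α]

/-- The generating polynomial of `turnCount` over the arrangements of `S`; for `#S = n`
it is `R_n(x) / x`. -/
noncomputable def turnPoly (S : Finset α) : ℤ[X] :=
  ∑ l ∈ arrangements S, X ^ turnCount l

lemma runA_eq_turnCount_ofFn_add_one (n : ℕ) (σ : Equiv.Perm (Fin n)) :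
    runA n σ = turnCount (List.ofFn σ) + 1 := by
  have runA_eq_word : runA n σ =
      turnCount (List.ofFn fun i : Fin n ↦ permWord n σ (1 + i)) + 1 := by
    rw [turnCount_ofFn_nat, runA, add_comm, add_comm 1 n]
    rfl
  have order_eq (i j : Fin n) : permWord n σ (1 + i) < permWord n σ (1 + j) ↔ σ i < σ j := by
    simp [permWord, Nat.one_add_le_iff]
  rw [runA_eq_word, turnCount_ofFn_congr order_eq]

lemma runPoly_eq_X_mul_turnPoly (S : Finset α) : runPoly #S = X * turnPoly S := by
  have hS : S = univ.map (S.orderEmbOfFin rfl).toEmbedding := (map_orderEmbOfFin_univ S rfl).symm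
  have turnPoly_eq : turnPoly S = turnPoly (univ : Finset (Fin #S)) := by
    conv_lhs => rw [hS, turnPoly, sum_arrangements_map]
    refine sum_congr rfl fun l _ ↦ ?_
    have order_eq (i j : Fin #S) : S.orderEmbOfFin rfl i < S.orderEmbOfFin rfl j ↔ id i < id j :=
      (S.orderEmbOfFin rfl).lt_iff_lt
    exact congrArg (X ^ ·) ((turnCount_map_congr order_eq l).trans (by rw [List.map_id]))
  rw [turnPoly_eq, runPoly, turnPoly, ← sum_perm_ofFn, mul_sum]
  simp only [runA_eq_turnCount_ofFn_add_one, pow_succ']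

end TurnPoly

section Powerset

variable {α M : Type*} [DecidableEq α] [AddCommMonoid M]

lemma sum_powerset_eq_sum_powerset_sdiff {P N : Finset α} (hP : P ⊆ N) (f : Finset α → M) :
    ∑ T ∈ N.powerset, f T = ∑ T ∈ P.powerset, ∑ U ∈ (N \ P).powerset, f (T ∪ U) := by
  rw [← sum_product']
  refine sum_nbij' (fun T ↦ (T ∩ P, T \ P)) (fun x ↦ x.1 ∪ x.2) ?_ ?_ ?_ ?_ ?_
  all_goals simp only [mem_product, mem_powerset]
  · grind
  · grind
  · grind
  · rintro ⟨T, U⟩ ⟨hT, hU⟩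
    ext i <;> grind
  · intro T _
    rw [union_comm, sdiff_union_inter]

lemma sum_powerset_eq_add_sum_ssubsets_erase_empty {N : Finset α} (hne : N.Nonempty)
    (f : Finset α → M) :
    ∑ P ∈ N.powerset, f P = f N + (f ∅ + ∑ P ∈ N.ssubsets.erase ∅, f P) := by
  rw [add_sum_erase _ _ (empty_mem_ssubsets hne), ssubsets, add_sum_erase _ _ (mem_powerset_self N)]

lemma sum_ssubsets_erase_empty_apply_card (f : ℕ → M) (N : Finset α) :
    ∑ P ∈ N.ssubsets.erase ∅, f #P = ∑ k ∈ Icc 1 (#N - 1), (#N).choose k • f k := by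
  have proper_eq_filter : N.ssubsets.erase ∅ = {P ∈ N.powerset | #P ∈ Icc 1 (#N - 1)} := by
    ext P
    have ssubset_iff : P ⊂ N ↔ P ⊆ N ∧ #P < #N :=
      ⟨fun h ↦ ⟨h.1, card_lt_card h⟩, fun h ↦ ⟨h.1, fun hNP ↦ h.2.not_ge (card_le_card hNP)⟩⟩
    rw [mem_erase, ← nonempty_iff_ne_empty, ← card_pos, mem_ssubsets, ssubset_iff, mem_filter,
      mem_powerset, mem_Icc, and_left_comm]
    exact and_congr_right fun _ ↦ by omega
  rw [proper_eq_filter, sum_filter,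
    sum_powerset_apply_card fun k ↦ if k ∈ Icc 1 (#N - 1) then f k else 0]
  simp only [smul_ite, smul_zero, ← sum_filter]
  congr 1
  ext k
  simp only [mem_filter, mem_range, mem_Icc]
  omega

end Powerset

section SignedSum

variable {M : Type*} [AddCommMonoid M]

/-- The letter `i` or `-i`, the letters with a negative sign being those of `T`. -/
def signedLetter (T : Finset ℕ) (i : ℕ) : ℤ := if i ∈ T then -i else i

lemma signedLetter_injective (T : Finset ℕ) : Function.Injective (signedLetter T) := by
  intro i j h
  unfold signedLetter at h
  grind

lemma signedLetter_zero (T : Finset ℕ) : signedLetter T 0 = 0 := by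
  simp [signedLetter]

lemma map_signedLetter_congr {T T' : Finset ℕ} {l : List ℕ} (h : ∀ i ∈ l, i ∈ T ↔ i ∈ T') :
    l.map (signedLetter T) = l.map (signedLetter T') :=
  List.map_congr_left fun i hi ↦ by simp only [signedLetter, h i hi]

/-- The sum of `f` over the signed words on `P`, that is, over the words in which exactly one of
`i` and `-i` occurs, exactly once, for every `i ∈ P`. Such a word is encoded by the set of its
negative letters and by the arrangement of its absolute values. -/
def signedSum (P : Finset ℕ) (f : List ℤ → M) : M :=
  ∑ T ∈ P.powerset, ∑ l ∈ arrangements P, f (l.map (signedLetter T))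

lemma signedSum_empty (f : List ℤ → M) : signedSum ∅ f = f [] := by
  simp [signedSum, arrangements_empty]

lemma signedSum_add (P : Finset ℕ) (f g : List ℤ → M) :
    signedSum P (fun w ↦ f w + g w) = signedSum P f + signedSum P g := by
  simp only [signedSum, sum_add_distrib]

lemma signedSum_mul {R : Type*} [NonUnitalNonAssocSemiring R] (P : Finset ℕ)
    (f : List ℤ → R) (c : R) :
    signedSum P (fun w ↦ f w * c) = signedSum P f * c := by
  simp only [signedSum, sum_mul]

lemma mul_signedSum {R : Type*} [NonUnitalNonAssocSemiring R] (P : Finset ℕ)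
    (f : List ℤ → R) (c : R) :
    signedSum P (fun w ↦ c * f w) = c * signedSum P f := by
  simp only [signedSum, mul_sum]

lemma signedSum_reverse (P : Finset ℕ) (f : List ℤ → M) :
    signedSum P (fun w ↦ f w.reverse) = signedSum P f := by
  simp only [signedSum, ← List.map_reverse]
  exact sum_congr rfl fun T _ ↦ sum_arrangements_reverse P fun l ↦ f (l.map (signedLetter T))

lemma signedSum_neg (P : Finset ℕ) (f : List ℤ → M) :
    signedSum P (fun w ↦ f (w.map (- ·))) = signedSum P f := by
  refine sum_nbij' (P \ ·) (P \ ·) (by simp) (by simp) (fun T hT ↦ ?_) (fun T hT ↦ ?_)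
    fun T _ ↦ sum_congr rfl fun l hl ↦ ?_
  · exact Finset.sdiff_sdiff_eq_self (mem_powerset.1 hT)
  · exact Finset.sdiff_sdiff_eq_self (mem_powerset.1 hT)
  · dsimp only
    rw [List.map_map]
    congr 1
    refine List.map_congr_left fun i hi ↦ ?_
    have hiP := (mem_iff_of_mem_arrangements hl).1 hi
    by_cases hiT : i ∈ T <;> simp [signedLetter, hiP, hiT]

lemma signedSum_congr {P : Finset ℕ} {f g : List ℤ → M}
    (h : ∀ w : List ℤ, (∀ i, i ∈ w.map Int.natAbs ↔ i ∈ P) → f w = g w) :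
    signedSum P f = signedSum P g := by
  refine sum_congr rfl fun T _ ↦ sum_congr rfl fun l hl ↦ h _ fun i ↦ ?_
  have natAbs_signedLetter : Int.natAbs ∘ signedLetter T = id := by
    funext j
    by_cases hj : j ∈ T <;> simp [signedLetter, hj]
  rw [List.map_map, natAbs_signedLetter, List.map_id, mem_iff_of_mem_arrangements hl]

lemma sum_signed_arrangements_insert_zero {N : Finset ℕ} (h0 : 0 ∉ N) (f : List ℤ → M) :
    ∑ T ∈ N.powerset, ∑ l ∈ arrangements (insert 0 N), f (l.map (signedLetter T)) =
      ∑ P ∈ N.powerset, signedSum P fun u ↦ signedSum (N \ P) fun v ↦ f (u ++ 0 :: v) := by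
  simp only [sum_arrangements_insert h0, List.map_append, List.map_cons, signedLetter_zero]
  rw [sum_comm]
  refine sum_congr rfl fun P hP ↦ ?_
  rw [sum_powerset_eq_sum_powerset_sdiff (mem_powerset.1 hP)]
  refine sum_congr rfl fun T hT ↦ ?_
  rw [sum_comm]
  refine sum_congr rfl fun u hu ↦ sum_congr rfl fun U hU ↦ sum_congr rfl fun v hv ↦ ?_
  rw [mem_powerset] at hT hU
  have sign_u : u.map (signedLetter (T ∪ U)) = u.map (signedLetter T) :=
    map_signedLetter_congr fun i hi ↦ by
      have := (mem_iff_of_mem_arrangements hu).1 hi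
      grind
  have sign_v : v.map (signedLetter (T ∪ U)) = v.map (signedLetter U) :=
    map_signedLetter_congr fun i hi ↦ by
      have := (mem_iff_of_mem_arrangements hv).1 hi
      grind
  rw [sign_u, sign_v]

/-- The letter of the signed permutation `π` at position `i`, with `±1, …, ±k` relabelled as
`±e 0, …, ±e (k - 1)`. -/
def relabeledLetter {k : ℕ} (e : Fin k → ℕ) (π : SignedPerm k) (i : Fin k) : ℤ :=
  if π.2 i then -(e (π.1 i) : ℤ) else e (π.1 i)

/-- The word of the signed permutation `π` with `±1, …, ±k` relabelled as `±e 0, …, ±e (k - 1)`. -/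
def relabeledWord {k : ℕ} (e : Fin k → ℕ) (π : SignedPerm k) : List ℤ :=
  List.ofFn (relabeledLetter e π)

lemma sum_relabeledWord {k : ℕ} (e : Fin k ↪ ℕ) (f : List ℤ → M) :
    ∑ π : SignedPerm k, f (relabeledWord e π) = signedSum (univ.map e) f := by
  -- `SignedPerm` attaches the signs to positions, `signedSum` attaches them to letters.
  have sum_signs (σ : Equiv.Perm (Fin k)) : ∑ s : Fin k → Bool, f (relabeledWord e (σ, s)) =
      ∑ T ∈ (univ.map e).powerset, f (((List.ofFn σ).map e).map (signedLetter T)) := by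
    refine sum_nbij' (fun s ↦ ({i | s i} : Finset (Fin k)).map (σ.toEmbedding.trans e))
      (fun T i ↦ e (σ i) ∈ T) (fun s _ ↦ ?_) (fun _ _ ↦ mem_univ _) (fun s _ ↦ ?_)
      (fun T hT ↦ ?_) fun s _ ↦ congrArg f ?_
    · rw [mem_powerset, ← map_map]
      exact map_subset_map.2 (subset_univ _)
    · funext i
      simp
    · ext i
      have hi : i ∈ T → ∃ j, e (σ j) = i := fun hiT ↦ by
        obtain ⟨j, -, rfl⟩ := mem_map.1 (mem_powerset.1 hT hiT)
        exact ⟨σ.symm j, by simp⟩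
      simp only [mem_map, mem_filter, mem_univ, true_and, decide_eq_true_eq]
      constructor
      · rintro ⟨j, hj, rfl⟩
        exact hj
      · intro hiT
        obtain ⟨j, rfl⟩ := hi hiT
        exact ⟨j, hiT, rfl⟩
    · rw [relabeledWord, List.map_ofFn, List.map_ofFn]
      congr 1
      funext i
      simp [relabeledLetter, signedLetter]
  simp only [Fintype.sum_prod_type, sum_signs, signedSum, sum_arrangements_map]
  rw [sum_comm]
  exact sum_congr rfl fun T _ ↦ sum_perm_ofFn k fun l ↦ f ((l.map e).map (signedLetter T))

end SignedSum

section SignedTurnPoly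

lemma signedWord_zero (k : ℕ) (π : SignedPerm k) : signedWord k π 0 = 0 := by
  simp [signedWord]

lemma signedWord_succ {k : ℕ} (π : SignedPerm k) (i : Fin k) :
    signedWord k π (i + 1) = if π.2 i then -((π.1 i : ℕ) + 1 : ℤ) else (π.1 i : ℕ) + 1 := by
  simp [signedWord]

section Relabeling

variable {k : ℕ} {e : Fin k → ℕ}

lemma relabeledLetter_pos_iff (hpos : ∀ i, 0 < e i) (π : SignedPerm k) (i : Fin k) :
    0 < relabeledLetter e π i ↔ 0 < signedWord k π (i + 1) := by
  have := hpos (π.1 i)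
  rw [relabeledLetter, signedWord_succ]
  split_ifs <;> omega

lemma relabeledLetter_neg_iff (hpos : ∀ i, 0 < e i) (π : SignedPerm k) (i : Fin k) :
    relabeledLetter e π i < 0 ↔ signedWord k π (i + 1) < 0 := by
  have := hpos (π.1 i)
  rw [relabeledLetter, signedWord_succ]
  split_ifs <;> omega

lemma relabeledLetter_lt_iff (he : StrictMono e) (hpos : ∀ i, 0 < e i) (π : SignedPerm k)
    (i j : Fin k) : relabeledLetter e π i < relabeledLetter e π j ↔
      signedWord k π (i + 1) < signedWord k π (j + 1) := by
  have e_lt_iff (i j : Fin k) : e i < e j ↔ (i : ℕ) < j := he.lt_iff_lt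
  have := hpos (π.1 i)
  have := hpos (π.1 j)
  have := e_lt_iff (π.1 i) (π.1 j)
  have := e_lt_iff (π.1 j) (π.1 i)
  rw [relabeledLetter, relabeledLetter, signedWord_succ, signedWord_succ]
  split_ifs <;> omega

lemma runB_eq_turnCount_relabeledWord_add_one (he : StrictMono e) (hpos : ∀ i, 0 < e i)
    (π : SignedPerm k) : runB k π = turnCount (0 :: relabeledWord e π) + 1 := by
  let w : Fin (k + 1) → ℤ := Fin.cons 0 (relabeledLetter e π)
  have runB_eq_word : runB k π =
      turnCount (List.ofFn fun i : Fin (k + 1) ↦ signedWord k π (0 + i)) + 1 := by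
    rw [turnCount_ofFn_nat, runB, add_comm]
    simp
  have cons_eq : 0 :: relabeledWord e π = List.ofFn w := by
    simp [w, relabeledWord, List.ofFn_succ]
  have order_eq (i j : Fin (k + 1)) :
      signedWord k π (0 + i) < signedWord k π (0 + j) ↔ w i < w j := by
    cases i using Fin.cases <;> cases j using Fin.cases <;>
      simp [w, signedWord_zero, relabeledLetter_pos_iff hpos, relabeledLetter_neg_iff hpos,
        relabeledLetter_lt_iff he hpos]
  rw [runB_eq_word, cons_eq, turnCount_ofFn_congr order_eq]

lemma headI_relabeledWord_pos_iff (hpos : ∀ i, 0 < e i) (π : SignedPerm k) :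
    0 < (relabeledWord e π).headI ↔ 0 < signedWord k π 1 := by
  cases k with
  | zero => simp [relabeledWord, signedWord]
  | succ k =>
    rw [relabeledWord, List.ofFn_succ, List.headI_cons, relabeledLetter_pos_iff hpos,
      Fin.val_zero, zero_add]

end Relabeling

/-- The generating polynomial of `turnCount` of `0 w` over the signed words `w` on `P` that start
with a positive letter; for `0 ∉ P` and `#P = k` it is `R_k^{B,>}(x) / x`. -/
noncomputable def signedTurnPoly (P : Finset ℕ) : ℤ[X] :=
  signedSum P fun w ↦ if 0 < w.headI then X ^ turnCount (0 :: w) else 0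

lemma runPolyBgt_eq_X_mul_signedTurnPoly {P : Finset ℕ} (h0 : 0 ∉ P) :
    runPolyBgt #P = X * signedTurnPoly P := by
  let e := P.orderEmbOfFin rfl
  have hpos (i : Fin #P) : 0 < e i :=
    Nat.pos_of_ne_zero fun h ↦ h0 (h ▸ P.orderEmbOfFin_mem rfl i)
  have sum_eq := sum_relabeledWord e.toEmbedding
    fun w ↦ if 0 < w.headI then (X : ℤ[X]) ^ turnCount (0 :: w) else 0
  rw [map_orderEmbOfFin_univ P rfl] at sum_eq
  rw [signedTurnPoly, ← sum_eq, runPolyBgt, mul_sum]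
  refine sum_congr rfl fun π _ ↦ ?_
  rw [runB_eq_turnCount_relabeledWord_add_one e.strictMono hpos, pow_succ', mul_ite, mul_zero]
  exact if_congr (headI_relabeledWord_pos_iff hpos π).symm rfl rfl

lemma signedTurnPoly_eq_signedSum_neg (P : Finset ℕ) :
    signedTurnPoly P = signedSum P fun w ↦ if w.headI < 0 then X ^ turnCount (0 :: w) else 0 := by
  rw [signedTurnPoly, ← signedSum_neg]
  congr 1
  funext w
  have turn_neg : turnCount (0 :: w.map (- ·)) = turnCount (0 :: w) := by
    rw [← turnCount_map_neg (0 :: w), List.map_cons, neg_zero]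
  rw [turn_neg]
  exact if_congr (by cases w <;> simp) rfl rfl

variable {P Q : Finset ℕ}

lemma signedSum_congr_cons {M : Type*} [AddCommMonoid M] {f g : List ℤ → M} (h0 : 0 ∉ P)
    (hne : P.Nonempty) (h : ∀ a w, a ≠ 0 → f (a :: w) = g (a :: w)) :
    signedSum P f = signedSum P g := by
  refine signedSum_congr fun w hw ↦ ?_
  cases w with
  | nil => simpa using (hw _).2 hne.choose_spec
  | cons a w =>
    refine h a w fun ha ↦ h0 ((hw 0).1 ?_)
    simp [ha]

lemma signedSum_X_pow_turnCount (h0 : 0 ∉ P) (hne : P.Nonempty) :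
    signedSum P (fun w ↦ (X : ℤ[X]) ^ turnCount (0 :: w)) = 2 * signedTurnPoly P := by
  rw [two_mul]
  nth_rw 2 [signedTurnPoly_eq_signedSum_neg]
  rw [signedTurnPoly, ← signedSum_add]
  refine signedSum_congr_cons h0 hne fun a w ha ↦ ?_
  rcases ha.lt_or_gt with neg | pos
  · simp [neg, neg.not_gt]
  · simp [pos, pos.not_gt]

lemma signedSum_X_pow_turnCount_reverse_append (h0 : 0 ∉ Q) (hne : Q.Nonempty) {a : ℤ} (ha : a ≠ 0)
    (u : List ℤ) :
    signedSum Q (fun v ↦ (X : ℤ[X]) ^ turnCount ((a :: u).reverse ++ 0 :: v)) =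
      X ^ turnCount (0 :: a :: u) * ((1 + X) * signedTurnPoly Q) := by
  -- A turn at `0` is created exactly when `v` starts with the sign of `a`.
  let c (s : Prop) [Decidable s] : ℤ[X] := if s then X else 1
  have split_sign : signedSum Q (fun v ↦ (X : ℤ[X]) ^ turnCount ((a :: u).reverse ++ 0 :: v)) =
      signedSum Q fun v ↦ X ^ turnCount (0 :: a :: u) *
        (c (0 < a) * (if 0 < v.headI then X ^ turnCount (0 :: v) else 0) +
          c (a < 0) * (if v.headI < 0 then X ^ turnCount (0 :: v) else 0)) := by
    refine signedSum_congr_cons h0 hne fun b v hb ↦ ?_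
    rw [turnCount_reverse_append_cons]
    rcases ha.lt_or_gt with ha | ha <;> rcases hb.lt_or_gt with hb | hb <;>
      simp [c, ha, hb, ha.not_gt, hb.not_gt, pow_add, mul_comm, mul_left_comm]
  have c_add_c : c (0 < a) + c (a < 0) = 1 + X := by
    rcases ha.lt_or_gt with ha | ha <;> simp [c, ha, ha.not_gt, add_comm]
  rw [split_sign, mul_signedSum, signedSum_add, mul_signedSum, mul_signedSum,
    ← signedTurnPoly_eq_signedSum_neg, ← signedTurnPoly, ← add_mul, c_add_c]

lemma signedSum_signedSum_X_pow_turnCount (hP0 : 0 ∉ P) (hP : P.Nonempty) (hQ0 : 0 ∉ Q)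
    (hQ : Q.Nonempty) :
    signedSum P (fun u ↦ signedSum Q fun v ↦ (X : ℤ[X]) ^ turnCount (u.reverse ++ 0 :: v)) =
      2 * (1 + X) * signedTurnPoly P * signedTurnPoly Q := by
  calc
    _ = signedSum P fun u ↦ X ^ turnCount (0 :: u) * ((1 + X) * signedTurnPoly Q) :=
      signedSum_congr_cons hP0 hP fun a u ha ↦ signedSum_X_pow_turnCount_reverse_append hQ0 hQ ha u
    _ = 2 * signedTurnPoly P * ((1 + X) * signedTurnPoly Q) := by
      rw [signedSum_mul, signedSum_X_pow_turnCount hP0 hP]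
    _ = _ := by ring

end SignedTurnPoly

section CutAtZero

variable {N P : Finset ℕ}

/-- The generating polynomial of `turnCount` over the words obtained from a signed word `u` on `P`,
read backwards, the letter `0` and a signed word `v` on `N \ P`. -/
noncomputable def cutTurnPoly (N P : Finset ℕ) : ℤ[X] :=
  signedSum P fun u ↦ signedSum (N \ P) fun v ↦ X ^ turnCount (u.reverse ++ 0 :: v)

lemma two_pow_card_mul_runPoly (h0 : 0 ∉ N) :
    2 ^ #N * runPoly (#N + 1) = X * ∑ P ∈ N.powerset, cutTurnPoly N P := by
  have runPoly_eq (T : Finset ℕ) : runPoly (#N + 1) =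
      X * ∑ l ∈ arrangements (insert 0 N), X ^ turnCount (l.map (signedLetter T)) := by
    let e : ℕ ↪ ℤ := ⟨signedLetter T, signedLetter_injective T⟩
    have := runPoly_eq_X_mul_turnPoly ((insert 0 N).map e)
    rwa [card_map, card_insert_of_notMem h0, turnPoly, sum_arrangements_map] at this
  calc
    2 ^ #N * runPoly (#N + 1) = ∑ T ∈ N.powerset, runPoly (#N + 1) := by
      simp [card_powerset]
    _ = X * ∑ T ∈ N.powerset, ∑ l ∈ arrangements (insert 0 N),
          X ^ turnCount (l.map (signedLetter T)) := by
      rw [mul_sum]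
      exact sum_congr rfl fun T _ ↦ runPoly_eq T
    _ = X * ∑ P ∈ N.powerset, cutTurnPoly N P := by
      rw [sum_signed_arrangements_insert_zero h0 fun w ↦ (X : ℤ[X]) ^ turnCount w]
      refine congrArg _ (sum_congr rfl fun P _ ↦ ?_)
      exact (signedSum_reverse P _).symm

lemma X_mul_cutTurnPoly_empty (h0 : 0 ∉ N) (hne : N.Nonempty) :
    X * cutTurnPoly N ∅ = 2 * runPolyBgt #N := by
  have cut_eq : cutTurnPoly N ∅ = signedSum N fun v ↦ X ^ turnCount (0 :: v) := by
    simp [cutTurnPoly, signedSum_empty]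
  rw [cut_eq, signedSum_X_pow_turnCount h0 hne, runPolyBgt_eq_X_mul_signedTurnPoly h0]
  ring

lemma X_mul_cutTurnPoly_self (h0 : 0 ∉ N) (hne : N.Nonempty) :
    X * cutTurnPoly N N = 2 * runPolyBgt #N := by
  have cut_eq : cutTurnPoly N N = signedSum N fun u ↦ X ^ turnCount (0 :: u) := by
    simp only [cutTurnPoly, sdiff_self, bot_eq_empty, signedSum_empty, ← List.reverse_cons,
      turnCount_reverse]
  rw [cut_eq, signedSum_X_pow_turnCount h0 hne, runPolyBgt_eq_X_mul_signedTurnPoly h0]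
  ring

lemma X_sq_mul_cutTurnPoly (h0 : 0 ∉ N) (hne : P.Nonempty) (hPN : P ⊂ N) :
    X ^ 2 * cutTurnPoly N P = 2 * (1 + X) * (runPolyBgt #P * runPolyBgt (#N - #P)) := by
  have hP0 : 0 ∉ P := fun h ↦ h0 (hPN.1 h)
  have hQ0 : 0 ∉ N \ P := fun h ↦ h0 (mem_sdiff.1 h).1
  rw [cutTurnPoly, signedSum_signedSum_X_pow_turnCount hP0 hne hQ0 (sdiff_nonempty.2 hPN.2),
    ← card_sdiff_of_subset hPN.1, runPolyBgt_eq_X_mul_signedTurnPoly hP0,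
    runPolyBgt_eq_X_mul_signedTurnPoly hQ0]
  ring

lemma X_sq_mul_sum_cutTurnPoly (h0 : 0 ∉ N) (hne : N.Nonempty) :
    X ^ 2 * ∑ P ∈ N.powerset, cutTurnPoly N P =
      2 * (2 * X * runPolyBgt #N + (1 + X) * ∑ k ∈ Icc 1 (#N - 1),
        ((#N).choose k : ℤ[X]) * runPolyBgt k * runPolyBgt (#N - k)) := by
  have proper_cuts : X ^ 2 * ∑ P ∈ N.ssubsets.erase ∅, cutTurnPoly N P =
      2 * (1 + X) * ∑ k ∈ Icc 1 (#N - 1),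
        ((#N).choose k : ℤ[X]) * runPolyBgt k * runPolyBgt (#N - k) := by
    have by_card :=
      sum_ssubsets_erase_empty_apply_card (fun k ↦ runPolyBgt k * runPolyBgt (#N - k)) N
    simp only [nsmul_eq_mul, ← mul_assoc] at by_card
    rw [← by_card, mul_sum, mul_sum]
    refine sum_congr rfl fun P hP ↦ ?_
    rw [mem_erase, mem_ssubsets, ← nonempty_iff_ne_empty] at hP
    exact X_sq_mul_cutTurnPoly h0 hP.1 hP.2
  rw [sum_powerset_eq_add_sum_ssubsets_erase_empty hne]
  linear_combination proper_cuts + X * X_mul_cutTurnPoly_empty h0 hne +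
    X * X_mul_cutTurnPoly_self h0 hne

end CutAtZero

/-- Chow–Ma identity: For `n ≥ 1`,
`x · 2^{n−1} R_{n+1}(x) = 2x R_n^{B,>}(x) + (1+x) Σ_{k=1}^{n−1} C(n,k) R_k^{B,>}(x) R_{n−k}^{B,>}(x)`. -/
theorem statement18 (n : ℕ) (hn : 1 ≤ n) :
    X * 2 ^ (n - 1) * runPoly (n + 1) =
      2 * X * runPolyBgt n +
        (1 + X) * ∑ k ∈ Finset.Icc 1 (n - 1),
          (n.choose k : Polynomial ℤ) * runPolyBgt k * runPolyBgt (n - k) := by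
  have h0 : 0 ∉ Icc 1 n := by simp
  have cut := two_pow_card_mul_runPoly h0
  have cuts := X_sq_mul_sum_cutTurnPoly h0 (nonempty_Icc.2 hn)
  rw [Nat.card_Icc, Nat.add_sub_cancel] at cut cuts
  have two_pow : (2 : ℤ[X]) ^ n = 2 * 2 ^ (n - 1) := by
    rw [← pow_succ', Nat.sub_add_cancel hn]
  rw [two_pow] at cut
  refine mul_left_cancel₀ (two_ne_zero (α := ℤ[X])) ?_
  linear_combination X * cut + cuts
end
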